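/- In Bernoulli bond percolation on Z^d, for every ε > 0 there is c > 0 such that for all p ∈ [0, 1−ε] and all n ≥ 1, θ_n'(p) ≥ (c/2)·(n/Σ_n(p))·θ_n(p), where θ_n(p) = P_p[0 ↔ ∂Λ_n] and Σ_n(p) = Σ_{k=0}^{n−1} θ_k(p). -/

import Mathlib

open MeasureTheory

/-- Vertices of the lattice `ℤ^d`. -/
abbrev Vertex (d : ℕ) := Fin d → ℤ

/-- Nearest-neighbour edges of `ℤ^d`: the pair `(v, i)` represents the edge
`{v, v + e_i}` where `e_i` is the `i`-th unit vector. -/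
abbrev Edge (d : ℕ) := (Fin d → ℤ) × Fin d

/-- A percolation configuration: each edge is open (`true`) or closed (`false`). -/
abbrev Config (d : ℕ) := Edge d → Bool

/-- `u` and `v` are joined by an open edge in the configuration `ω`. -/
def openAdj {d : ℕ} (ω : Config d) (u v : Vertex d) : Prop :=
  (∃ i, v = u + Pi.single i 1 ∧ ω (u, i) = true) ∨
  (∃ i, u = v + Pi.single i 1 ∧ ω (v, i) = true)

/-- `x ↔ y`: there is a finite path of open edges joining `x` and `y`. -/
def Conn {d : ℕ} (ω : Config d) (x y : Vertex d) : Prop :=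
  Relation.ReflTransGen (openAdj ω) x y
open ENNReal
/-- `P` is the family of Bernoulli bond percolation measures: for `p ∈ [0,1]`,
`P p` is the product of Bernoulli(`p`) measures on the edges. -/
def IsBernoulliFamily {d : ℕ} (P : ℝ → Measure (Config d)) : Prop :=
  (∀ p, IsProbabilityMeasure (P p)) ∧
  ∀ p ∈ Set.Icc (0 : ℝ) 1, ∀ (S : Finset (Edge d)) (f : Edge d → Bool),
    P p {ω | ∀ e ∈ S, ω e = f e} =
      ∏ e ∈ S, ENNReal.ofReal (if f e then p else 1 - p)


/-- The inner boundary `∂Λ_n` of the box `Λ_n = [-n,n]^d ∩ ℤ^d`. -/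
def bdry (d n : ℕ) : Set (Vertex d) :=
  {x | (∀ i, |x i| ≤ (n : ℤ)) ∧ ∃ i, |x i| = (n : ℤ)}

/-- `θ_n(p) = P_p[0 ↔ ∂Λ_n]`. -/
noncomputable def theta {d : ℕ} (P : ℝ → Measure (Config d)) (n : ℕ) (p : ℝ) : ℝ :=
  (P p {ω | ∃ y ∈ bdry d n, Conn ω 0 y}).toReal


set_option linter.unusedSectionVars false
section OSSS
variable {E : Type*} [Fintype E] [DecidableEq E]

/-- Bernoulli weight of a single bit. -/
noncomputable def bw (p : ℝ) (b : Bool) : ℝ := if b then p else 1 - p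

/-- Bernoulli weight of a configuration. -/
noncomputable def wt (p : ℝ) (σ : E → Bool) : ℝ := ∏ e, bw p (σ e)

/-- Expectation under the Bernoulli product measure. -/
noncomputable def ex (p : ℝ) (h : (E → Bool) → ℝ) : ℝ := ∑ σ, wt p σ * h σ

lemma bw_nonneg {p : ℝ} (h0 : 0 ≤ p) (h1 : p ≤ 1) (b : Bool) : 0 ≤ bw p b := by
  unfold bw; split_ifs <;> linarith

lemma wt_nonneg {p : ℝ} (h0 : 0 ≤ p) (h1 : p ≤ 1) (σ : E → Bool) : 0 ≤ wt p σ :=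
  Finset.prod_nonneg fun _ _ => bw_nonneg h0 h1 _

lemma ex_mono {p : ℝ} (h0 : 0 ≤ p) (h1 : p ≤ 1) {f g : (E → Bool) → ℝ} (h : ∀ σ, f σ ≤ g σ) :
    ex p f ≤ ex p g :=
  Finset.sum_le_sum fun σ _ => mul_le_mul_of_nonneg_left (h σ) (wt_nonneg h0 h1 σ)

lemma ex_nonneg {p : ℝ} (h0 : 0 ≤ p) (h1 : p ≤ 1) {f : (E → Bool) → ℝ} (h : ∀ σ, 0 ≤ f σ) :
    0 ≤ ex p f :=
  Finset.sum_nonneg fun σ _ => mul_nonneg (wt_nonneg h0 h1 σ) (h σ)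

lemma ex_const (p : ℝ) (c : ℝ) : ex (E := E) p (fun _ => c) = c := by
  unfold ex wt
  rw [← Finset.sum_mul]
  have := Finset.prod_univ_sum (fun _ : E => (Finset.univ : Finset Bool)) (fun _ b => bw p b)
  rw [Fintype.piFinset_univ] at this
  rw [← this]
  simp [bw]

lemma ex_add (p : ℝ) (f g : (E → Bool) → ℝ) :
    ex p (fun σ => f σ + g σ) = ex p f + ex p g := by
  simp [ex, mul_add, Finset.sum_add_distrib]

lemma ex_sub (p : ℝ) (f g : (E → Bool) → ℝ) :
    ex p (fun σ => f σ - g σ) = ex p f - ex p g := by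
  simp [ex, mul_sub, Finset.sum_sub_distrib]

lemma ex_mul_const (p : ℝ) (f : (E → Bool) → ℝ) (c : ℝ) :
    ex p (fun σ => f σ * c) = ex p f * c := by
  simp [ex, Finset.sum_mul, mul_assoc]

/-- Weight of the configuration away from `e`. -/
noncomputable def wte (p : ℝ) (e : E) (σ : E → Bool) : ℝ :=
  ∏ x ∈ Finset.univ.erase e, bw p (σ x)

lemma wt_eq (p : ℝ) (e : E) (σ : E → Bool) : wt p σ = bw p (σ e) * wte p e σ := by
  unfold wt wte
  rw [Finset.mul_prod_erase _ (fun x => bw p (σ x)) (Finset.mem_univ e)]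

lemma wte_update (p : ℝ) (e : E) (σ : E → Bool) (b : Bool) :
    wte p e (Function.update σ e b) = wte p e σ := by
  unfold wte
  refine Finset.prod_congr rfl fun x hx => ?_
  rw [Function.update_of_ne (Finset.ne_of_mem_erase hx)]

lemma sum_flip (e : E) (b : Bool) (G : (E → Bool) → ℝ)
    (hG : ∀ σ b, G (Function.update σ e b) = G σ) :
    ∑ σ, (if σ e = b then G σ else 0) = ∑ σ, (if σ e = !b then G σ else 0) := by
  let φ : (E → Bool) → (E → Bool) := fun σ => Function.update σ e (!(σ e))
  have hφ : Function.Involutive φ := by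
    intro σ; simp [φ]
  rw [← Equiv.sum_comp (hφ.toPerm φ)]
  refine Finset.sum_congr rfl fun σ _ => ?_
  have : hφ.toPerm φ σ = Function.update σ e (!(σ e)) := rfl
  rw [this, hG]
  simp only [Function.update_self]
  cases σ e <;> cases b <;> simp

lemma ex_update (p : ℝ) (e : E) (b : Bool) (h : (E → Bool) → ℝ) :
    ex p (fun σ => h (Function.update σ e b)) = ∑ σ, if σ e = b then wte p e σ * h σ else 0 := by
  let G : (E → Bool) → ℝ := fun σ => wte p e σ * h (Function.update σ e b)
  have hG : ∀ σ b, G (Function.update σ e b) = G σ := by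
    intro σ b'; simp [G, wte_update]
  have h1 : ex p (fun σ => h (Function.update σ e b)) =
      bw p b * (∑ σ, if σ e = b then G σ else 0) +
      bw p (!b) * (∑ σ, if σ e = !b then G σ else 0) := by
    unfold ex
    rw [Finset.mul_sum, Finset.mul_sum, ← Finset.sum_add_distrib]
    refine Finset.sum_congr rfl fun σ _ => ?_
    rw [wt_eq p e]
    cases hσ : σ e <;> cases b <;> simp [G] <;> ring
  rw [h1, ← sum_flip e b G hG, ← add_mul]
  have : bw p b + bw p (!b) = 1 := by cases b <;> simp [bw]
  rw [this, one_mul]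
  refine Finset.sum_congr rfl fun σ _ => ?_
  split_ifs with hσ
  · simp only [G]; rw [← hσ, Function.update_eq_self]
  · rfl

lemma ex_split (p : ℝ) (e : E) (h : (E → Bool) → ℝ) :
    ex p h = p * ex p (fun σ => h (Function.update σ e true)) +
      (1 - p) * ex p (fun σ => h (Function.update σ e false)) := by
  rw [ex_update, ex_update]
  unfold ex
  rw [Finset.mul_sum, Finset.mul_sum, ← Finset.sum_add_distrib]
  refine Finset.sum_congr rfl fun σ _ => ?_
  rw [wt_eq p e]
  cases hσ : σ e <;> simp [bw] <;> ring

/-- Discrete derivative expectation. -/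
noncomputable def piv (p : ℝ) (f : (E → Bool) → ℝ) (e : E) : ℝ :=
  ex p (fun σ => f (Function.update σ e true) - f (Function.update σ e false))

lemma upd_le (σ : E → Bool) (e : E) : Function.update σ e false ≤ Function.update σ e true := by
  rw [update_le_update_iff]; exact ⟨by decide, fun _ _ => le_rfl⟩

lemma piv_nonneg {p : ℝ} (h0 : 0 ≤ p) (h1 : p ≤ 1) {f : (E → Bool) → ℝ} (hf : Monotone f) (e : E) :
    0 ≤ piv p f e :=
  ex_nonneg h0 h1 fun σ => sub_nonneg.2 (hf (upd_le σ e))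

/-- The Russo formula. -/
lemma russo (p : ℝ) (f : (E → Bool) → ℝ) :
    HasDerivAt (fun q => ex q f) (∑ e, piv p f e) p := by
  have hbw : ∀ b : Bool, HasDerivAt (fun q => bw q b) (if b then 1 else -1) p := by
    intro b
    cases b
    · simpa [bw] using (hasDerivAt_id p).const_sub 1
    · simpa [bw] using hasDerivAt_id' p
  have hwt : ∀ σ : E → Bool, HasDerivAt (fun q => wt q σ)
      (∑ e, wte p e σ * (if σ e then 1 else -1)) p := by
    intro σ
    have := HasDerivAt.fun_finsetProd (u := Finset.univ) (f := fun e q => bw q (σ e))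
      (fun e _ => hbw (σ e))
    simpa [wt, wte] using this
  have h := HasDerivAt.fun_sum (u := Finset.univ) (fun (σ : E → Bool) _ => (hwt σ).mul_const (f σ))
  suffices hd : ∑ e, piv p f e =
      ∑ σ, (∑ e, wte p e σ * (if σ e then 1 else -1)) * f σ by
    rw [hd]; exact h
  simp only [Finset.sum_mul]
  rw [Finset.sum_comm (s := (Finset.univ : Finset (E → Bool)))]
  refine Finset.sum_congr rfl fun e _ => ?_
  unfold piv
  rw [ex_sub, ex_update, ex_update, ← Finset.sum_sub_distrib]
  refine Finset.sum_congr rfl fun σ _ => ?_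
  cases hσ : σ e <;> simp

/-- The OSSS inequality for monotone explorations. -/
lemma osss {p : ℝ} (h0 : 0 ≤ p) (h1 : p ≤ 1) (f : (E → Bool) → ℝ) (hf : Monotone f)
    (S : Finset E) : ∀ (g : (E → Bool) → ℝ) (_ : ∀ σ, 0 ≤ g σ ∧ g σ ≤ 1)
      (R : (E → Bool) → Finset E) (_ : Monotone R) (_ : ∀ σ, R σ ⊆ S)
      (_ : ∀ σ σ', (∀ e ∈ R σ, σ e = σ' e) → g σ = g σ'),
      ex p (fun σ => f σ * g σ) - ex p f * ex p g ≤
        ∑ e ∈ S, ex p (fun σ => if e ∈ R σ then 1 else 0) * (p * (1 - p) * piv p f e) := by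
  induction S using Finset.strongInduction with
  | H S ih =>
  intro g hg R hR hS hdet
  have hpp : 0 ≤ p * (1 - p) := mul_nonneg h0 (by linarith)
  by_cases hemp : R (fun _ => false) = ∅
  · have hc : ∀ σ, g σ = g (fun _ => false) := by
      intro σ
      refine (hdet _ _ ?_).symm
      simp [hemp]
    have hc' : g = fun _ => g (fun _ => false) := funext hc
    have : ex p (fun σ => f σ * g σ) - ex p f * ex p g = 0 := by
      rw [hc', ex_const, ex_mul_const]; ring
    rw [this]
    refine Finset.sum_nonneg fun e _ => mul_nonneg ?_ (mul_nonneg hpp (piv_nonneg h0 h1 hf e))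
    exact ex_nonneg h0 h1 fun σ => by split_ifs <;> norm_num
  · obtain ⟨e, he⟩ := Finset.nonempty_iff_ne_empty.2 hemp
    have heR : ∀ σ, e ∈ R σ := fun σ => hR (a := fun _ => false) (fun x => Bool.false_le _) he
    have heS : e ∈ S := hS _ he
    have step : ∀ b : Bool, ex p (fun σ => f σ * g (Function.update σ e b)) -
        ex p f * ex p (fun σ => g (Function.update σ e b)) ≤
        ∑ x ∈ S.erase e, ex p (fun σ => if x ∈ R (Function.update σ e b) then 1 else 0) *
          (p * (1 - p) * piv p f x) := by
      intro b
      have := ih (S.erase e) (Finset.erase_ssubset heS) (fun σ => g (Function.update σ e b))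
        (fun σ => hg _) (fun σ => (R (Function.update σ e b)).erase e)
        (fun σ σ' h => Finset.erase_subset_erase _
          (hR (update_le_update_iff.2 ⟨le_rfl, fun x _ => h x⟩)))
        (fun σ => Finset.erase_subset_erase _ (hS _)) (by
          intro σ σ' h
          refine hdet _ _ fun x hx => ?_
          by_cases hxe : x = e
          · subst hxe; simp
          · rw [Function.update_of_ne hxe, Function.update_of_ne hxe]
            exact h x (Finset.mem_erase.2 ⟨hxe, hx⟩))
      refine this.trans (le_of_eq ?_)
      refine Finset.sum_congr rfl fun x hx => ?_
      simp [Finset.mem_erase, Finset.ne_of_mem_erase hx]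
    have s1 := step true
    have s0 := step false
    have key : ex p (fun σ => f σ * g σ) ≤ p * ex p (fun σ => f σ * g (Function.update σ e true)) +
        (1 - p) * ex p (fun σ => f σ * g (Function.update σ e false)) +
        p * (1 - p) * piv p f e := by
      rw [ex_split p e (fun σ => f σ * g σ),
        ex_split p e (fun σ => f σ * g (Function.update σ e true)),
        ex_split p e (fun σ => f σ * g (Function.update σ e false))]
      simp only [Function.update_idem]
      have hk : ex p (fun σ => (f (Function.update σ e true) - f (Function.update σ e false)) *
          (g (Function.update σ e true) - g (Function.update σ e false))) ≤ piv p f e := by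
        refine ex_mono h0 h1 fun σ => ?_
        have a1 := sub_nonneg.2 (hf (upd_le σ e))
        have a2 := hg (Function.update σ e true)
        have a3 := hg (Function.update σ e false)
        nlinarith
      have hk2 : ex p (fun σ => (f (Function.update σ e true) - f (Function.update σ e false)) *
          (g (Function.update σ e true) - g (Function.update σ e false))) =
          ex p (fun σ => f (Function.update σ e true) * g (Function.update σ e true)) -
          ex p (fun σ => f (Function.update σ e true) * g (Function.update σ e false)) -
          ex p (fun σ => f (Function.update σ e false) * g (Function.update σ e true)) +
          ex p (fun σ => f (Function.update σ e false) * g (Function.update σ e false)) := by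
        rw [← ex_sub, ← ex_sub, ← ex_add]
        congr 1; funext σ; ring
      rw [hk2] at hk
      have := mul_le_mul_of_nonneg_left hk hpp
      linarith
    have hgs := ex_split p e g
    have hsum : ∑ x ∈ S, ex p (fun σ => if x ∈ R σ then 1 else 0) * (p * (1 - p) * piv p f x) =
        p * (1 - p) * piv p f e +
        (p * ∑ x ∈ S.erase e, ex p (fun σ => if x ∈ R (Function.update σ e true) then 1 else 0) *
          (p * (1 - p) * piv p f x) +
        (1 - p) * ∑ x ∈ S.erase e,
          ex p (fun σ => if x ∈ R (Function.update σ e false) then 1 else 0) *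
          (p * (1 - p) * piv p f x)) := by
      rw [← Finset.add_sum_erase S _ heS]
      congr 1
      · simp [heR, ex_const]
      · rw [Finset.mul_sum, Finset.mul_sum, ← Finset.sum_add_distrib]
        refine Finset.sum_congr rfl fun x _ => ?_
        rw [ex_split p e (fun σ => if x ∈ R σ then 1 else 0)]
        ring
    rw [hsum, hgs]
    have t1 := mul_le_mul_of_nonneg_left s1 h0
    have t0 := mul_le_mul_of_nonneg_left s0 (show 0 ≤ 1 - p by linarith)
    linarith

end OSSS
section Geometry
variable {d : ℕ}

/-- Sup norm on the lattice, with values in `ℕ`. -/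
def nrm (x : Vertex d) : ℕ := Finset.univ.sup fun i => (x i).natAbs

lemma nrm_le {x : Vertex d} {m : ℕ} : nrm x ≤ m ↔ ∀ i, (x i).natAbs ≤ m := by
  simp [nrm, Finset.sup_le_iff]

lemma natAbs_le_nrm (x : Vertex d) (i : Fin d) : (x i).natAbs ≤ nrm x := nrm_le.1 le_rfl i

lemma nrm_add_le (x y : Vertex d) : nrm (x + y) ≤ nrm x + nrm y := by
  rw [nrm_le]; intro i
  have := natAbs_le_nrm x i
  have := natAbs_le_nrm y i
  have := Int.natAbs_add_le (x i) (y i)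
  simp only [Pi.add_apply]; omega

lemma nrm_neg (x : Vertex d) : nrm (-x) = nrm x := by
  simp [nrm]

lemma nrm_zero : nrm (0 : Vertex d) = 0 := by
  simp [nrm]

lemma nrm_single (i : Fin d) : nrm (Pi.single i 1 : Vertex d) ≤ 1 := by
  rw [nrm_le]; intro j
  by_cases h : j = i
  · subst h; simp
  · simp [Pi.single_eq_of_ne h]

lemma mem_bdry (hd : 0 < d) (n : ℕ) (x : Vertex d) : x ∈ bdry d n ↔ nrm x = n := by
  constructor
  · rintro ⟨h, i, hi⟩
    apply le_antisymm
    · rw [nrm_le]; intro j; have := h j; rw [Int.abs_eq_natAbs] at this; omega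
    · have := natAbs_le_nrm x i; rw [Int.abs_eq_natAbs] at hi; omega
  · intro h
    refine ⟨fun i => ?_, ?_⟩
    · have := natAbs_le_nrm x i; rw [Int.abs_eq_natAbs]; omega
    · have : Nonempty (Fin d) := ⟨⟨0, hd⟩⟩
      obtain ⟨i, -, hi⟩ := Finset.exists_mem_eq_sup Finset.univ Finset.univ_nonempty
        (fun i => (x i).natAbs)
      refine ⟨i, ?_⟩
      have : nrm x = (x i).natAbs := hi
      rw [Int.abs_eq_natAbs]
      omega

lemma openAdj_symm {ω : Config d} {u v : Vertex d} (h : openAdj ω u v) : openAdj ω v u :=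
  h.elim Or.inr Or.inl

lemma conn_symm {ω : Config d} {u v : Vertex d} (h : Conn ω u v) : Conn ω v u := by
  induction h with
  | refl => exact Relation.ReflTransGen.refl
  | tail _ h ih => exact Relation.ReflTransGen.head (openAdj_symm h) ih

lemma openAdj_mono {ω ω' : Config d} (h : ω ≤ ω') {u v : Vertex d} (huv : openAdj ω u v) :
    openAdj ω' u v := by
  have key : ∀ e, ω e = true → ω' e = true := fun e he => by
    have := h e; rw [he] at this; exact top_le_iff.1 this
  rcases huv with ⟨i, h1, h2⟩ | ⟨i, h1, h2⟩
  · exact Or.inl ⟨i, h1, key _ h2⟩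
  · exact Or.inr ⟨i, h1, key _ h2⟩

lemma conn_mono {ω ω' : Config d} (h : ω ≤ ω') {u v : Vertex d} (huv : Conn ω u v) :
    Conn ω' u v :=
  Relation.ReflTransGen.mono (fun _ _ => openAdj_mono h) _ _ huv

lemma adj_nrm {ω : Config d} {u v : Vertex d} (h : openAdj ω u v) (z : Vertex d) :
    nrm (v - z) ≤ nrm (u - z) + 1 := by
  rcases h with ⟨i, h1, -⟩ | ⟨i, h1, -⟩
  · have e : v - z = (u - z) + Pi.single i 1 := by rw [h1]; abel
    have := nrm_add_le (u - z) (Pi.single i 1)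
    have := nrm_single i
    rw [e]; omega
  · have e : v - z = (u - z) + -Pi.single i 1 := by rw [h1]; abel
    have := nrm_add_le (u - z) (-Pi.single i 1)
    have := nrm_single i
    rw [nrm_neg] at *
    rw [e]; omega

/-- First-passage decomposition of a path. -/
lemma cross {ω : Config d} (c : Vertex d) (m : ℕ) {x y : Vertex d} (h : Conn ω x y)
    (hy : m ≤ nrm (y - c)) (hx : nrm (x - c) ≤ m) :
    ∃ z, nrm (z - c) = m ∧ Conn ω z y ∧
      Relation.ReflTransGen (fun u v => openAdj ω u v ∧ nrm (u - c) ≤ m ∧ nrm (v - c) ≤ m) x z := by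
  revert hx
  induction h using Relation.ReflTransGen.head_induction_on with
  | refl => intro hx; exact ⟨y, le_antisymm hx hy, Relation.ReflTransGen.refl, .refl⟩
  | head h h' ih =>
    rename_i a b
    intro hx
    by_cases hxm : nrm (a - c) = m
    · exact ⟨a, hxm, Relation.ReflTransGen.head h h', .refl⟩
    · have hb : nrm (b - c) ≤ m := by have := adj_nrm h c; omega
      obtain ⟨z, hz, hzy, hbz⟩ := ih hb
      exact ⟨z, hz, hzy, Relation.ReflTransGen.head ⟨h, hx, hb⟩ hbz⟩

/-- Edges of the box `Λ_n`. -/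
noncomputable def boxE (d n : ℕ) : Finset (Edge d) :=
  ((Fintype.piFinset fun _ : Fin d => Finset.Icc (-(n : ℤ)) n) ×ˢ Finset.univ).filter
    fun e => nrm e.1 ≤ n ∧ nrm (e.1 + Pi.single e.2 1) ≤ n

lemma mem_boxE {n : ℕ} {e : Edge d} :
    e ∈ boxE d n ↔ nrm e.1 ≤ n ∧ nrm (e.1 + Pi.single e.2 1) ≤ n := by
  unfold boxE
  rw [Finset.mem_filter]
  refine ⟨fun h => h.2, fun h => ⟨?_, h⟩⟩
  rw [Finset.mem_product]
  refine ⟨?_, Finset.mem_univ _⟩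
  rw [Fintype.mem_piFinset]
  intro i
  have := nrm_le.1 h.1 i
  rw [Finset.mem_Icc]; omega

/-- Extend a configuration on a finite set of edges by closed edges. -/
noncomputable def extc {S : Finset (Edge d)} (σ : S → Bool) : Config d :=
  fun e => if h : e ∈ S then σ ⟨e, h⟩ else false

lemma extc_mono {S : Finset (Edge d)} : Monotone (extc (S := S)) := by
  intro σ σ' h e
  unfold extc
  split_ifs with he
  · exact h _
  · exact le_rfl

lemma extc_le {S : Finset (Edge d)} (ω : Config d) : extc (fun e : S => ω e.1) ≤ ω := by
  intro e
  unfold extc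
  split_ifs with he
  · exact le_rfl
  · exact Bool.false_le _

lemma extc_eq_true {S : Finset (Edge d)} {σ : S → Bool} {e : Edge d} (h : extc σ e = true) :
    ∃ he : e ∈ S, σ ⟨e, he⟩ = true := by
  unfold extc at h
  split_ifs at h with he
  exact ⟨he, h⟩

/-- `v` is connected to distance `m` from `v`. -/
def hit (ω : Config d) (v : Vertex d) (m : ℕ) : Prop := ∃ y, nrm (y - v) = m ∧ Conn ω v y

lemma hit_mono {ω ω' : Config d} (h : ω ≤ ω') {v : Vertex d} {m : ℕ} (hh : hit ω v m) :
    hit ω' v m := by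
  obtain ⟨y, hy, hc⟩ := hh
  exact ⟨y, hy, conn_mono h hc⟩

lemma hit_local (ω : Config d) (n : ℕ) :
    hit ω 0 n ↔ hit (extc (fun e : boxE d n => ω e.1)) 0 n := by
  refine ⟨?_, hit_mono (extc_le ω)⟩
  rintro ⟨y, hy, hc⟩
  obtain ⟨z, hz, -, hxz⟩ := cross 0 n hc hy.ge (by simp [nrm_zero])
  refine ⟨z, hz, Relation.ReflTransGen.mono ?_ _ _ hxz⟩
  rintro u v ⟨h, hu, hv⟩
  rw [sub_zero] at hu hv
  rcases h with ⟨i, h1, h2⟩ | ⟨i, h1, h2⟩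
  · refine Or.inl ⟨i, h1, ?_⟩
    have : (u, i) ∈ boxE d n := mem_boxE.2 ⟨hu, by simpa [← h1] using hv⟩
    simp [extc, this, h2]
  · refine Or.inr ⟨i, h1, ?_⟩
    have : (v, i) ∈ boxE d n := mem_boxE.2 ⟨hv, by simpa [← h1] using hu⟩
    simp [extc, this, h2]

/-- Translate of a configuration. -/
def shiftc (v : Vertex d) (ω : Config d) : Config d := fun e => ω (e.1 + v, e.2)

lemma openAdj_shift (v : Vertex d) (ω : Config d) (a b : Vertex d) :
    openAdj (shiftc v ω) a b ↔ openAdj ω (a + v) (b + v) := by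
  have key : ∀ (a b : Vertex d) (i : Fin d), b = a + Pi.single i 1 ↔
      b + v = a + v + Pi.single i 1 := by
    intro a b i
    rw [add_right_comm a v]
    exact (add_left_inj v).symm
  unfold openAdj shiftc
  simp only [← key]

lemma conn_shift {v : Vertex d} {ω : Config d} {a b : Vertex d} (h : Conn (shiftc v ω) a b) :
    Conn ω (a + v) (b + v) := by
  induction h with
  | refl => exact .refl
  | tail _ h ih => exact Relation.ReflTransGen.tail ih ((openAdj_shift v ω _ _).1 h)

lemma conn_shift_rev {v : Vertex d} {ω : Config d} {a b : Vertex d} (h : Conn ω a b) :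
    Conn (shiftc v ω) (a - v) (b - v) := by
  induction h with
  | refl => exact .refl
  | tail _ h ih =>
    refine Relation.ReflTransGen.tail ih ((openAdj_shift v ω _ _).2 ?_)
    simpa using h

lemma hit_shift (v : Vertex d) (ω : Config d) (m : ℕ) : hit ω v m ↔ hit (shiftc v ω) 0 m := by
  constructor
  · rintro ⟨y, hy, hc⟩
    refine ⟨y - v, by simpa using hy, ?_⟩
    simpa using conn_shift_rev (v := v) hc
  · rintro ⟨y, hy, hc⟩
    refine ⟨y + v, by simpa using hy, ?_⟩
    simpa using conn_shift hc

lemma prob_cyl {P : ℝ → Measure (Config d)} (hP : IsBernoulliFamily P) {p : ℝ}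
    (hp : p ∈ Set.Icc (0 : ℝ) 1) {E : Type*} [Fintype E] [DecidableEq E] (φ : E → Edge d)
    (hφ : Function.Injective φ) (A : (E → Bool) → Prop) [DecidablePred A] :
    (P p {ω | A (fun e => ω (φ e))}).toReal = ex p (fun σ => if A σ then 1 else 0) := by
  have := hP.1 p
  have h1 : {ω : Config d | A (fun e => ω (φ e))} =
      ⋃ σ ∈ Finset.univ.filter A, {ω | (fun e => ω (φ e)) = σ} := by
    ext ω; simp
  have hmeas : ∀ σ : E → Bool, MeasurableSet {ω : Config d | (fun e => ω (φ e)) = σ} := by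
    intro σ
    have hm : Measurable (fun (ω : Config d) (e : E) => ω (φ e)) := by
      fun_prop
    exact hm (measurableSet_singleton σ)
  have hval : ∀ σ : E → Bool, (P p {ω | (fun e => ω (φ e)) = σ}).toReal = wt p σ := by
    intro σ
    have hs : {ω : Config d | (fun e => ω (φ e)) = σ} =
        {ω | ∀ e ∈ Finset.univ.image φ, ω e = Function.extend φ σ (fun _ => false) e} := by
      ext ω
      simp [funext_iff, hφ.extend_apply]
    rw [hs, hP.2 p hp, Finset.prod_image (fun a _ b _ h => hφ h), ENNReal.toReal_prod]
    unfold wt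
    refine Finset.prod_congr rfl fun e _ => ?_
    rw [hφ.extend_apply]
    exact ENNReal.toReal_ofReal (bw_nonneg hp.1 hp.2 (σ e))
  rw [h1, measure_biUnion_finset ?_ (fun σ _ => hmeas σ),
    ENNReal.toReal_sum (fun σ _ => measure_ne_top _ _)]
  · simp only [hval]
    unfold ex
    rw [Finset.sum_filter]
    simp
  · intro σ _ σ' _ hne
    refine Set.disjoint_left.2 fun ω h h' => hne ?_
    exact h.symm.trans h'

lemma theta_hit (hd : 0 < d) (P : ℝ → Measure (Config d)) (n : ℕ) (p : ℝ) :
    theta P n p = (P p {ω | hit ω 0 n}).toReal := by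
  unfold theta hit
  simp only [mem_bdry hd, sub_zero]

open Classical in
/-- The connection indicator as a function on finite configurations. -/
noncomputable def ff (d n : ℕ) : (boxE d n → Bool) → ℝ :=
  fun σ => if hit (extc σ) 0 n then 1 else 0

lemma theta_eq (hd : 0 < d) {P : ℝ → Measure (Config d)} (hP : IsBernoulliFamily P) (n : ℕ) {p : ℝ}
    (hp : p ∈ Set.Icc (0 : ℝ) 1) : theta P n p = ex p (ff d n) := by
  have hs : {ω : Config d | hit ω 0 n} =
      {ω | hit (extc (fun e : boxE d n => ω e.1)) 0 n} := Set.ext fun ω => hit_local ω n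
  rw [theta_hit hd, hs]
  classical
  unfold ff
  exact prob_cyl hP hp (fun e : boxE d n => e.1) Subtype.val_injective
    (fun σ => hit (extc σ) 0 n)

lemma theta_shift (hd : 0 < d) {P : ℝ → Measure (Config d)} (hP : IsBernoulliFamily P) (n : ℕ)
    {p : ℝ} (hp : p ∈ Set.Icc (0 : ℝ) 1) (v : Vertex d) :
    (P p {ω | hit ω v n}).toReal = theta P n p := by
  rw [theta_eq hd hP n hp]
  have hs : {ω : Config d | hit ω v n} =
      {ω | hit (extc (fun e : boxE d n => shiftc v ω e.1)) 0 n} :=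
    Set.ext fun ω => (hit_shift v ω n).trans (hit_local _ n)
  rw [hs]
  classical
  unfold ff
  refine prob_cyl hP hp (fun e : boxE d n => (e.1.1 + v, e.1.2)) ?_
    (fun σ => hit (extc σ) 0 n)
  rintro ⟨⟨a, i⟩, _⟩ ⟨⟨b, j⟩, _⟩ h
  simpa using h

lemma ff_mono (n : ℕ) : Monotone (ff d n) := by
  intro σ σ' h
  unfold ff
  split_ifs with h1 h2
  · exact le_rfl
  · exact absurd (hit_mono (extc_mono h) h1) h2
  · norm_num
  · norm_num

lemma ff_bd (n : ℕ) (σ) : 0 ≤ ff d n σ ∧ ff d n σ ≤ 1 := by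
  unfold ff; split_ifs <;> norm_num

/-- `u` is connected to `∂Λ_k`. -/
def CK (ω : Config d) (k : ℕ) (u : Vertex d) : Prop := ∃ y, nrm y = k ∧ Conn ω y u

lemma CK_mono {ω ω' : Config d} (h : ω ≤ ω') {k : ℕ} {u : Vertex d} (hh : CK ω k u) :
    CK ω' k u := by
  obtain ⟨y, hy, hc⟩ := hh
  exact ⟨y, hy, conn_mono h hc⟩

open Classical in
/-- Edges revealed when exploring from `∂Λ_k`. -/
noncomputable def RR (d n k : ℕ) (σ : boxE d n → Bool) : Finset (boxE d n) :=
  Finset.univ.filter fun e =>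
    CK (extc σ) k e.1.1 ∨ CK (extc σ) k (e.1.1 + Pi.single e.1.2 1)

lemma RR_mono (n k : ℕ) : Monotone (RR d n k) := by
  intro σ σ' h e he
  simp only [RR, Finset.mem_filter, Finset.mem_univ, true_and] at he ⊢
  exact he.imp (CK_mono (extc_mono h)) (CK_mono (extc_mono h))

lemma adj_transfer {n k : ℕ} {σ σ' : boxE d n → Bool} {ω : boxE d n → Bool}
    (h : ∀ e ∈ RR d n k ω, σ e = σ' e) {u v : Vertex d} (hu : CK (extc ω) k u)
    (huv : openAdj (extc σ) u v) : openAdj (extc σ') u v := by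
  rcases huv with ⟨i, h1, h2⟩ | ⟨i, h1, h2⟩
  · obtain ⟨he, hs⟩ := extc_eq_true h2
    have := h ⟨_, he⟩ (by simp only [RR, Finset.mem_filter, Finset.mem_univ, true_and]; exact Or.inl hu)
    refine Or.inl ⟨i, h1, ?_⟩
    unfold extc
    rw [dif_pos he, ← this, hs]
  · obtain ⟨he, hs⟩ := extc_eq_true h2
    have := h ⟨_, he⟩ (by
      simp only [RR, Finset.mem_filter, Finset.mem_univ, true_and]
      right; rw [← h1]; exact hu)
    refine Or.inr ⟨i, h1, ?_⟩
    unfold extc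
    rw [dif_pos he, ← this, hs]

lemma conn_iff {n k : ℕ} {σ σ' : boxE d n → Bool} (h : ∀ e ∈ RR d n k σ, σ e = σ' e)
    {y u : Vertex d} (hy : nrm y = k) : Conn (extc σ) y u ↔ Conn (extc σ') y u := by
  constructor
  · intro hc
    induction hc with
    | refl => exact .refl
    | tail h1 h2 ih => exact Relation.ReflTransGen.tail ih (adj_transfer h ⟨y, hy, h1⟩ h2)
  · intro hc
    induction hc with
    | refl => exact .refl
    | tail h1 h2 ih =>
      exact Relation.ReflTransGen.tail ih
        (adj_transfer (fun e he => (h e he).symm) ⟨y, hy, ih⟩ h2)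

lemma ff_det {n k : ℕ} (hk : k ≤ n) (σ σ' : boxE d n → Bool)
    (h : ∀ e ∈ RR d n k σ, σ e = σ' e) : ff d n σ = ff d n σ' := by
  have key : ∀ τ τ' : boxE d n → Bool,
      (∀ y u, nrm y = k → (Conn (extc τ) y u ↔ Conn (extc τ') y u)) →
      hit (extc τ) 0 n → hit (extc τ') 0 n := by
    rintro τ τ' hττ ⟨z, hz, hc⟩
    obtain ⟨y, hy, hyz, h0y⟩ := cross 0 k hc (by omega) (by simp [nrm_zero])
    rw [sub_zero] at hy
    have h0y' : Conn (extc τ) 0 y := Relation.ReflTransGen.mono (fun _ _ h => h.1) _ _ h0y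
    exact ⟨z, hz, (conn_symm ((hττ y 0 hy).1 (conn_symm h0y'))).trans ((hττ y z hy).1 hyz)⟩
  have : hit (extc σ) 0 n ↔ hit (extc σ') 0 n :=
    ⟨key σ σ' fun y u hy => conn_iff h hy, key σ' σ fun y u hy => (conn_iff h hy).symm⟩
  unfold ff
  by_cases h1 : hit (extc σ) 0 n
  · rw [if_pos h1, if_pos (this.1 h1)]
  · rw [if_neg h1, if_neg (fun h => h1 (this.2 h))]

/-- Distance used to bound the revealment. -/
def revDist (k m : ℕ) : ℕ := if m ≤ k then k - m else m - 1 - k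

lemma sum_revDist (a : ℕ → ℝ) (ha : ∀ j, 0 ≤ a j) {m n : ℕ} (hmn : m ≤ n) :
    ∑ k ∈ Finset.range n, a (revDist k m) ≤ 2 * ∑ k ∈ Finset.range n, a k := by
  obtain ⟨r, rfl⟩ := Nat.exists_eq_add_of_le hmn
  rw [Finset.sum_range_add (fun k => a (revDist k m))]
  have h1 : ∑ k ∈ Finset.range m, a (revDist k m) = ∑ k ∈ Finset.range m, a k := by
    rw [← Finset.sum_range_reflect a m]
    refine Finset.sum_congr rfl fun k hk => ?_
    have := Finset.mem_range.1 hk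
    rw [revDist, if_neg (by omega)]
  have h2 : ∑ k ∈ Finset.range r, a (revDist (m + k) m) = ∑ k ∈ Finset.range r, a k := by
    refine Finset.sum_congr rfl fun k hk => ?_
    rw [revDist, if_pos (by omega)]
    congr 1; omega
  have h3 : ∑ k ∈ Finset.range m, a k ≤ ∑ k ∈ Finset.range (m + r), a k :=
    Finset.sum_le_sum_of_subset_of_nonneg (Finset.range_mono (by omega)) fun _ _ _ => ha _
  have h4 : ∑ k ∈ Finset.range r, a k ≤ ∑ k ∈ Finset.range (m + r), a k :=
    Finset.sum_le_sum_of_subset_of_nonneg (Finset.range_mono (by omega)) fun _ _ _ => ha _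
  rw [h1, h2]; linarith

lemma CK_hit {ω : Config d} {k : ℕ} {u : Vertex d} (h : CK ω k u) : hit ω u (revDist k (nrm u)) := by
  obtain ⟨y, hy, hc⟩ := h
  have hj : revDist k (nrm u) ≤ nrm (y - u) := by
    have a1 := nrm_add_le (y - u) u
    have a2 := nrm_add_le (-(y - u)) y
    rw [nrm_neg] at a2
    have e1 : y - u + u = y := by abel
    have e2 : -(y - u) + y = u := by abel
    rw [e1] at a1; rw [e2] at a2
    unfold revDist; split_ifs <;> omega
  obtain ⟨z, hz, -, huz⟩ := cross u _ (conn_symm hc) hj (by simp [nrm_zero])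
  exact ⟨z, hz, Relation.ReflTransGen.mono (fun _ _ h => h.1) _ _ huz⟩

open Classical in
lemma CK_prob (hd : 0 < d) {P : ℝ → Measure (Config d)} (hP : IsBernoulliFamily P) (n k : ℕ)
    {p : ℝ} (hp : p ∈ Set.Icc (0 : ℝ) 1) (u : Vertex d) :
    ex p (fun σ : boxE d n → Bool => if CK (extc σ) k u then 1 else 0) ≤
      theta P (revDist k (nrm u)) p := by
  have := hP.1 p
  rw [← theta_shift hd hP _ hp u,
    ← prob_cyl hP hp (fun e : boxE d n => e.1) Subtype.val_injective (fun σ => CK (extc σ) k u)]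
  refine ENNReal.toReal_mono (measure_ne_top _ _) (measure_mono ?_)
  intro ω hω
  exact hit_mono (extc_le ω) (CK_hit hω)

open Classical in
lemma reveal_sum (hd : 0 < d) {P : ℝ → Measure (Config d)} (hP : IsBernoulliFamily P) (n : ℕ)
    {p : ℝ} (hp : p ∈ Set.Icc (0 : ℝ) 1) (e : boxE d n) :
    ∑ k ∈ Finset.range n, ex p (fun σ => if e ∈ RR d n k σ then 1 else 0) ≤
      4 * ∑ k ∈ Finset.range n, theta P k p := by
  have hth : ∀ j, 0 ≤ theta P j p := fun j => ENNReal.toReal_nonneg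
  have hm := mem_boxE.1 e.2
  have b1 := sum_revDist (fun j => theta P j p) hth hm.1
  have b2 := sum_revDist (fun j => theta P j p) hth hm.2
  have b3 : ∑ k ∈ Finset.range n, ex p (fun σ => if e ∈ RR d n k σ then 1 else 0) ≤
      ∑ k ∈ Finset.range n, (theta P (revDist k (nrm e.1.1)) p +
        theta P (revDist k (nrm (e.1.1 + Pi.single e.1.2 1))) p) := by
    refine Finset.sum_le_sum fun k _ => ?_
    refine le_trans ?_ (add_le_add (CK_prob hd hP n k hp _) (CK_prob hd hP n k hp _))
    rw [← ex_add]
    refine ex_mono hp.1 hp.2 fun σ => ?_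
    simp only [RR, Finset.mem_filter, Finset.mem_univ, true_and]
    by_cases h1 : CK (extc σ) k e.1.1 <;>
      by_cases h2 : CK (extc σ) k (e.1.1 + Pi.single e.1.2 1) <;> simp [h1, h2]
  rw [Finset.sum_add_distrib] at b3
  linarith

/-- Edges incident to the origin. -/
noncomputable def inc (d : ℕ) : Finset (Edge d) :=
  Finset.univ.image (fun i : Fin d => ((0 : Vertex d), i)) ∪
    Finset.univ.image (fun i : Fin d => ((-(Pi.single i 1) : Vertex d), i))

lemma theta_upper (hd : 0 < d) {P : ℝ → Measure (Config d)} (hP : IsBernoulliFamily P) {n : ℕ}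
    (hn : 1 ≤ n) {p : ℝ} (hp : p ∈ Set.Icc (0 : ℝ) 1) :
    theta P n p + (1 - p) ^ (inc d).card ≤ 1 := by
  have := hP.1 p
  have hB := hP.2 p hp (inc d) (fun _ => false)
  have hB' : (P p {ω | ∀ e ∈ inc d, ω e = false}).toReal = (1 - p) ^ (inc d).card := by
    rw [hB]
    simp only [Bool.false_eq_true, if_false, Finset.prod_const]
    rw [ENNReal.toReal_pow, ENNReal.toReal_ofReal (by linarith [hp.2])]
  have hmeas : MeasurableSet {ω : Config d | ∀ e ∈ inc d, ω e = false} := by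
    have : {ω : Config d | ∀ e ∈ inc d, ω e = false} = ⋂ e ∈ inc d, {ω | ω e = false} := by
      ext ω; simp
    rw [this]
    refine Finset.measurableSet_biInter _ fun e _ => ?_
    have hm : Measurable (fun ω : Config d => ω e) := measurable_pi_apply e
    exact hm (measurableSet_singleton false)
  have hdis : Disjoint {ω : Config d | hit ω 0 n} {ω | ∀ e ∈ inc d, ω e = false} := by
    refine Set.disjoint_left.2 ?_
    rintro ω ⟨y, hy, hc⟩ h
    have h0 : ∀ v, ¬ openAdj ω 0 v := by
      rintro v (⟨i, h1, h2⟩ | ⟨i, h1, h2⟩)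
      · have := h (0, i) (by simp [inc])
        simp [this] at h2
      · have hv : v = -(Pi.single i 1) := by
          rw [eq_neg_iff_add_eq_zero]; exact h1.symm
        have := h (v, i) (by
          rw [hv]
          exact Finset.mem_union_right _ (Finset.mem_image_of_mem _ (Finset.mem_univ i)))
        simp [this] at h2
    rcases Relation.ReflTransGen.cases_head hc with h' | ⟨v, hv, -⟩
    · subst h'; simp [nrm_zero] at hy; omega
    · exact h0 v hv
  rw [theta_hit hd, ← hB', ← ENNReal.toReal_add (measure_ne_top _ _) (measure_ne_top _ _),
    ← measure_union hdis hmeas]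
  exact ENNReal.toReal_le_of_le_ofReal zero_le_one (by simpa using prob_le_one)

end Geometry

/-- Differential inequality for Bernoulli percolation obtained by the OSSS
method: for every `ε > 0` there is `c > 0` such that for all `p ∈ [0, 1-ε]` and
`n ≥ 1`, `θ_n'(p) ≥ (c/2) (n / Σ_n(p)) θ_n(p)` with `Σ_n(p) = Σ_{k<n} θ_k(p)`. -/
theorem osss_differential_inequality {d : ℕ} (hd : 0 < d)
    (P : ℝ → Measure (Config d)) (hP : IsBernoulliFamily P) :
    ∀ ε > (0 : ℝ), ∃ c > (0 : ℝ), ∀ p ∈ Set.Icc (0 : ℝ) (1 - ε), ∀ n : ℕ, 1 ≤ n →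
      (c / 2) * ((n : ℝ) / ∑ k ∈ Finset.range n, theta P k p) * theta P n p ≤
        derivWithin (theta P n) (Set.Icc 0 1) p := by
  intro ε hε
  refine ⟨ε ^ (inc d).card / 2, by positivity, ?_⟩
  intro p hp n hn
  have hp1 : p ≤ 1 := by linarith [hp.2]
  have hpI : p ∈ Set.Icc (0 : ℝ) 1 := ⟨hp.1, hp1⟩
  have hder : derivWithin (theta P n) (Set.Icc 0 1) p = ∑ e, piv p (ff d n) e := by
    rw [derivWithin_congr (f := fun q => ex q (ff d n)) (fun q hq => theta_eq hd hP n hq)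
      (theta_eq hd hP n hpI)]
    exact (russo p (ff d n)).hasDerivWithinAt.derivWithin
      (uniqueDiffOn_Icc zero_lt_one p hpI)
  rw [hder]
  have hpiv : ∀ e, 0 ≤ piv p (ff d n) e := piv_nonneg hp.1 hp1 (ff_mono n)
  have hD : 0 ≤ ∑ e, piv p (ff d n) e := Finset.sum_nonneg fun e _ => hpiv e
  have hS : 0 ≤ ∑ k ∈ Finset.range n, theta P k p :=
    Finset.sum_nonneg fun k _ => ENNReal.toReal_nonneg
  have hth : 0 ≤ theta P n p := ENNReal.toReal_nonneg
  have hcov : ∀ k ∈ Finset.range n, theta P n p - theta P n p * theta P n p ≤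
      ∑ e, ex p (fun σ => if e ∈ RR d n k σ then 1 else 0) * (p * (1 - p) * piv p (ff d n) e) := by
    intro k hk
    have := osss hp.1 hp1 (ff d n) (ff_mono n) Finset.univ (ff d n) (ff_bd n) (RR d n k)
      (RR_mono n k) (fun _ => Finset.subset_univ _) (ff_det (Finset.mem_range.1 hk).le)
    have hsq : (fun σ => ff d n σ * ff d n σ) = ff d n := by
      funext σ; unfold ff; split_ifs <;> norm_num
    rw [hsq, ← theta_eq hd hP n hpI] at this
    exact this
  have hsum := Finset.sum_le_sum hcov
  rw [Finset.sum_const, Finset.card_range, nsmul_eq_mul, Finset.sum_comm] at hsum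
  have hub : ∑ e, ∑ k ∈ Finset.range n, ex p (fun σ => if e ∈ RR d n k σ then 1 else 0) *
      (p * (1 - p) * piv p (ff d n) e) ≤
      4 * (∑ k ∈ Finset.range n, theta P k p) * ∑ e, piv p (ff d n) e := by
    rw [Finset.mul_sum]
    refine Finset.sum_le_sum fun e _ => ?_
    rw [← Finset.sum_mul]
    refine mul_le_mul (reveal_sum hd hP n hpI e) ?_ ?_ (by linarith)
    · have : p * (1 - p) ≤ 1 := by nlinarith [hp.1]
      nlinarith [hpiv e]
    · exact mul_nonneg (mul_nonneg hp.1 (by linarith)) (hpiv e)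
  have hup := theta_upper hd hP hn hpI
  have hpow : ε ^ (inc d).card ≤ (1 - p) ^ (inc d).card :=
    pow_le_pow_left₀ hε.le (by linarith [hp.2]) _
  have hmain : ε ^ (inc d).card * (n * theta P n p) ≤
      4 * (∑ k ∈ Finset.range n, theta P k p) * ∑ e, piv p (ff d n) e := by
    refine le_trans ?_ (hsum.trans hub)
    have hnn : 0 ≤ (n : ℝ) * theta P n p := by positivity
    have : ε ^ (inc d).card ≤ 1 - theta P n p := by linarith
    nlinarith [mul_le_mul_of_nonneg_right this hnn]
  rcases hS.eq_or_lt with h0 | hpos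
  · rw [← h0]; simpa using hD
  · have : ε ^ (inc d).card / 2 / 2 * ((n : ℝ) / ∑ k ∈ Finset.range n, theta P k p) * theta P n p =
        ε ^ (inc d).card * (n * theta P n p) / (4 * ∑ k ∈ Finset.range n, theta P k p) := by
      field_simp
      ring
    rw [this, div_le_iff₀ (by positivity)]
    linarith
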